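/- arXiv:1603.07056 — 7 statements merged into one kernel-verified Lean document; each statement's English description precedes it below -/
import Mathlib

section
/- For every graph G with n vertices, clique number ω(G) and Hadwiger number h(G), one has h(G) ≤ ⌊(n + ω(G))/2⌋. -/
/-- `H` is a minor of `G`: there are disjoint nonempty connected branch sets in `G`,
one for each vertex of `H`, with an edge of `G` between the branch sets of any two
vertices adjacent in `H`. -/
def SimpleGraph.IsMinor {W V : Type*} (H : SimpleGraph W) (G : SimpleGraph V) : Prop :=
  ∃ f : W → Set V,
    (∀ w, (f w).Nonempty) ∧
    (∀ w, (G.induce (f w)).Connected) ∧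
    (Pairwise fun w₁ w₂ => Disjoint (f w₁) (f w₂)) ∧
    ∀ ⦃w₁ w₂⦄, H.Adj w₁ w₂ → ∃ v₁ ∈ f w₁, ∃ v₂ ∈ f w₂, G.Adj v₁ v₂

/-- The number of cliques (vertex subsets inducing complete subgraphs, including `∅`). -/
noncomputable def SimpleGraph.cliqueCount {V : Type*} [Fintype V] (G : SimpleGraph V) : ℕ :=
  Nat.card {s : Finset V // G.IsClique (s : Set V)}

/-- The number of cliques containing a given vertex. -/
noncomputable def SimpleGraph.cliqueCountOn {V : Type*} [Fintype V] (G : SimpleGraph V)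
    (v : V) : ℕ :=
  Nat.card {s : Finset V // G.IsClique (s : Set V) ∧ v ∈ s}

/-- The Hadwiger number: the largest `t` such that `K_t` is a minor of `G`. -/
noncomputable def SimpleGraph.hadwigerNumber {V : Type*} [Fintype V] (G : SimpleGraph V) : ℕ :=
  sSup {t | (completeGraph (Fin t)).IsMinor G}

/-- The matching number: the maximum number of edges of a matching in `G`. -/
noncomputable def SimpleGraph.matchingNumber {V : Type*} [Fintype V] (G : SimpleGraph V) : ℕ :=
  sSup {k | ∃ M : G.Subgraph, M.IsMatching ∧ M.edgeSet.ncard = k}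
/-- The Hadwiger number of a graph is at most `⌊(n + ω)/2⌋`. -/
theorem hadwigerNumber_le {V : Type*} [Fintype V] (G : SimpleGraph V) :
    G.hadwigerNumber ≤ (Fintype.card V + G.cliqueNum) / 2 := by
  classical
  apply csSup_le'
  rintro t ⟨f, hne, -, hdisj, hadj⟩
  rw [Nat.le_div_iff_mul_le (by norm_num)]
  choose x hx using hne
  have hinj : Function.Injective x := by
    intro a b hab
    by_contra h
    exact Set.disjoint_left.mp (hdisj h) (hx a) (hab ▸ hx b)
  let g : Fin t → Finset V := fun w => (f w).toFinset
  have hsum : ∑ w, (g w).card ≤ Fintype.card V := by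
    rw [← Finset.card_biUnion]
    · exact Finset.card_le_univ _
    · intro a _ b _ hab
      exact Set.disjoint_toFinset.mpr (hdisj hab)
  let S : Finset (Fin t) := Finset.univ.filter fun w => (g w).card = 1
  have hS : S.card ≤ G.cliqueNum := by
    rw [← Finset.card_image_of_injective S hinj]
    apply SimpleGraph.IsClique.card_le_cliqueNum
    have key : ∀ a ∈ S, ∀ v ∈ f a, v = x a := by
      intro a ha v hv
      have h1 : (g a).card = 1 := (Finset.mem_filter.mp ha).2
      exact Finset.card_le_one.mp h1.le v (Set.mem_toFinset.mpr hv) _ (Set.mem_toFinset.mpr (hx a))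
    intro u hu v hv huv
    obtain ⟨a, ha, rfl⟩ := Finset.mem_image.mp (Finset.mem_coe.mp hu)
    obtain ⟨b, hb, rfl⟩ := Finset.mem_image.mp (Finset.mem_coe.mp hv)
    have hab : a ≠ b := fun h => huv (by rw [h])
    obtain ⟨p, hp, q, hq, hpq⟩ := hadj (w₁ := a) (w₂ := b) hab
    rw [key a ha p hp, key b hb q hq] at hpq
    exact hpq
  have h2 : ∑ _w : Fin t, 2 ≤ ∑ w, ((g w).card + if (g w).card = 1 then 1 else 0) := by
    apply Finset.sum_le_sum
    intro w _
    have : 0 < (g w).card := Finset.card_pos.mpr ⟨x w, Set.mem_toFinset.mpr (hx w)⟩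
    split_ifs <;> omega
  rw [Finset.sum_add_distrib, ← Finset.card_filter] at h2
  simp only [Finset.sum_const, Finset.card_univ, Fintype.card_fin, smul_eq_mul] at h2
  change t * 2 ≤ _ + S.card at h2
  omega
end

section
/- Let G be a graph on n vertices with minimum degree δ and clique number ω, and set Δ = n − δ − 1 (the maximum degree of the complement of G). If n ≥ ω + 2Δ² + 2, then the Hadwiger number of G equals ⌊(n + ω)/2⌋. -/
theorem hd_pair {V : Type*} [DecidableEq V] (P Q : V → Prop) [DecidablePred P] [DecidablePred Q]
    (x y : V) (h : x ≠ y) (h1 : P x → ¬ Q y) (h2 : Q x → ¬ P y) :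
    (({x, y} : Finset V).filter P).card + (({x, y} : Finset V).filter Q).card ≤ 2 := by
  simp only [Finset.filter_insert, Finset.filter_singleton]
  by_cases p1 : P x <;> by_cases p2 : P y <;> by_cases p3 : Q x <;> by_cases p4 : Q y <;>
    first
    | exact absurd p4 (h1 p1)
    | exact absurd p2 (h2 p3)
    | simp [p1, p2, p3, p4, h]

set_option maxHeartbeats 1000000 in
theorem hd_exists_matching {V : Type*} [DecidableEq V] (R : Finset V) (A : V → V → Prop)
    [DecidableRel A] (hs : ∀ u v, A u v → A v u) (hi : ∀ u, ¬ A u u)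
    (hdeg : ∀ v ∈ R, R.card ≤ 2 * (R.filter (A v)).card) :
    ∀ k, 2 * k ≤ R.card → ∃ a b : Fin k → V, Function.Injective a ∧ Function.Injective b ∧
      (∀ i j, a i ≠ b j) ∧ (∀ i, a i ∈ R) ∧ (∀ i, b i ∈ R) ∧ ∀ i, A (a i) (b i) := by
  intro k
  induction k with
  | zero =>
    intro _
    exact ⟨Fin.elim0, Fin.elim0, fun i => i.elim0, fun i => i.elim0, fun i => i.elim0,
      fun i => i.elim0, fun i => i.elim0, fun i => i.elim0⟩
  | succ k ih =>
    intro hk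
    obtain ⟨a, b, ha, hb, hab, haR, hbR, hA⟩ := ih (by omega)
    -- extension by an edge between unmatched vertices
    by_cases hex : ∃ u ∈ R, ∃ v ∈ R, (∀ i, u ≠ a i) ∧ (∀ i, u ≠ b i) ∧ (∀ i, v ≠ a i) ∧
        (∀ i, v ≠ b i) ∧ A u v
    · obtain ⟨u, hu, v, hv, h1, h2, h3, h4, huv⟩ := hex
      have hne : u ≠ v := fun h => hi u (by rw [← h] at huv; exact huv)
      refine ⟨Fin.cons u a, Fin.cons v b, ?_, ?_, ?_, ?_, ?_, ?_⟩
      · rw [Fin.cons_injective_iff]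
        exact ⟨fun ⟨i, h⟩ => h1 i h.symm, ha⟩
      · rw [Fin.cons_injective_iff]
        exact ⟨fun ⟨i, h⟩ => h4 i h.symm, hb⟩
      · intro i j
        cases i using Fin.cases <;> cases j using Fin.cases <;> simp_all
        intro h; exact h3 _ h.symm
      · intro i; cases i using Fin.cases <;> simp_all
      · intro i; cases i using Fin.cases <;> simp_all
      · intro i; cases i using Fin.cases <;> simp_all
    · set M : Finset V := Finset.univ.image a ∪ Finset.univ.image b with hM
      have hMc : M.card ≤ 2 * k := by
        refine (Finset.card_union_le _ _).trans ?_
        have h1 := Finset.card_image_le (s := (Finset.univ : Finset (Fin k))) (f := a)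
        have h2 := Finset.card_image_le (s := (Finset.univ : Finset (Fin k))) (f := b)
        simp only [Finset.card_univ, Fintype.card_fin] at h1 h2
        omega
      have hRM : 1 < (R \ M).card := by
        have := Finset.le_card_sdiff M R
        omega
      obtain ⟨u, hu, v, hv, huv⟩ := Finset.one_lt_card.mp hRM
      have memM : ∀ x, x ∉ M → (∀ i, x ≠ a i) ∧ (∀ i, x ≠ b i) := by
        intro x hx
        constructor
        · rintro i rfl; exact hx (by simp [hM])
        · rintro i rfl; exact hx (by simp [hM])
      rw [Finset.mem_sdiff] at hu hv
      obtain ⟨hu1, hu2⟩ := memM u hu.2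
      obtain ⟨hv1, hv2⟩ := memM v hv.2
      have key : ∀ x ∈ R, x ∉ M → (R.filter (A x)).card ≤
          ∑ i, (({a i, b i} : Finset V).filter (A x)).card := by
        intro x hx hxM
        refine le_trans (Finset.card_le_card ?_) Finset.card_biUnion_le
        intro y hy
        rw [Finset.mem_filter] at hy
        have : y ∈ M := by
          by_contra hyM
          exact hex ⟨x, hx, y, hy.1, (memM x hxM).1, (memM x hxM).2, (memM y hyM).1,
            (memM y hyM).2, hy.2⟩
        rw [Finset.mem_biUnion]
        rw [hM, Finset.mem_union, Finset.mem_image, Finset.mem_image] at this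
        rcases this with ⟨i, _, rfl⟩ | ⟨i, _, rfl⟩
        · exact ⟨i, Finset.mem_univ _, by simp [hy.2]⟩
        · exact ⟨i, Finset.mem_univ _, by simp [hy.2]⟩
      have hswap : ∃ i, (A u (a i) ∧ A v (b i)) ∨ (A v (a i) ∧ A u (b i)) := by
        by_contra hno
        push Not at hno
        have hle : ∀ i ∈ (Finset.univ : Finset (Fin k)),
            (({a i, b i} : Finset V).filter (A u)).card
            + (({a i, b i} : Finset V).filter (A v)).card ≤ 2 := by
          intro i _
          have h1 := (hno i).1
          have h2 := (hno i).2
          exact hd_pair _ _ (a i) (b i) (hab i i) h1 h2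
        have hsum := Finset.sum_le_sum hle
        rw [Finset.sum_add_distrib] at hsum
        simp at hsum
        have := key u hu.1 hu.2
        have := key v hv.1 hv.2
        have := hdeg u hu.1
        have := hdeg v hv.1
        omega
      have fin : ∀ u v, u ∈ R → v ∈ R → u ≠ v → (∀ i, u ≠ a i) → (∀ i, u ≠ b i) →
          (∀ i, v ≠ a i) → (∀ i, v ≠ b i) → ∀ i, A u (a i) → A v (b i) →
          ∃ a b : Fin (k+1) → V, Function.Injective a ∧ Function.Injective b ∧
      (∀ i j, a i ≠ b j) ∧ (∀ i, a i ∈ R) ∧ (∀ i, b i ∈ R) ∧ ∀ i, A (a i) (b i) := by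
        intro u v hu hv huv h1 h2 h3 h4 i hA1 hA2
        refine ⟨Fin.cons v a, Fin.cons (b i) (Function.update b i u), ?_, ?_, ?_, ?_, ?_, ?_⟩
        · rw [Fin.cons_injective_iff]
          exact ⟨fun ⟨i, h⟩ => h3 i h.symm, ha⟩
        · rw [Fin.cons_injective_iff]
          constructor
          · rintro ⟨j, h⟩
            by_cases hj : j = i
            · subst hj; simp at h; exact h2 _ h
            · rw [Function.update_of_ne hj] at h; exact hj (hb h)
          · intro j l h
            simp only [Function.update_apply] at h
            split_ifs at h with hj hl hl
            · rw [hj, hl]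
            · exact absurd h (h2 _)
            · exact absurd h.symm (h2 _)
            · exact hb h
        · intro j l
          cases j using Fin.cases <;> cases l using Fin.cases <;>
            simp only [Fin.cons_zero, Fin.cons_succ, Function.update_apply]
          · exact h4 i
          · split_ifs
            · exact huv.symm
            · exact h4 _
          · exact hab _ _
          · split_ifs
            · exact (h1 _).symm
            · exact hab _ _
        · intro j; cases j using Fin.cases <;> simp_all
        · intro j; cases j using Fin.cases <;>
            simp only [Fin.cons_zero, Fin.cons_succ, Function.update_apply]
          · exact hbR i
          · split_ifs
            · exact hu
            · exact hbR _
        · intro j; cases j using Fin.cases <;>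
            simp only [Fin.cons_zero, Fin.cons_succ, Function.update_apply]
          · exact hA2
          · split_ifs with h
            · subst h; exact hs _ _ hA1
            · exact hA _
      obtain ⟨i, ⟨h1, h2⟩ | ⟨h1, h2⟩⟩ := hswap
      · exact fin u v hu.1 hv.1 huv hu1 hu2 hv1 hv2 i h1 h2
      · exact fin v u hv.1 hu.1 huv.symm hv1 hv2 hu1 hu2 i h1 h2

theorem hd_upper {V : Type*} [Fintype V] (G : SimpleGraph V) (t : ℕ)
    (h : (SimpleGraph.completeGraph (Fin t)).IsMinor G) : 2 * t ≤ Fintype.card V + G.cliqueNum := by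
  classical
  obtain ⟨f, hne, -, hdis, hadj⟩ := h
  choose g hg using hne
  have hginj : Function.Injective g := by
    intro i j hij
    by_contra hne
    exact Set.disjoint_left.mp (hdis hne) (hg i) (hij ▸ hg j)
  set S : Finset (Fin t) := Finset.univ.filter (fun i => (f i).toFinset.card = 1) with hS
  have hSf : ∀ i ∈ S, ∀ x ∈ f i, x = g i := by
    intro i hi x hx
    rw [hS, Finset.mem_filter] at hi
    obtain ⟨y, hy⟩ := Finset.card_eq_one.mp hi.2
    have h1 : x ∈ (f i).toFinset := by simpa using hx
    have h2 : g i ∈ (f i).toFinset := by simpa using hg i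
    rw [hy, Finset.mem_singleton] at h1 h2
    rw [h1, h2]
  have hcl : G.IsClique ((S.image g : Finset V) : Set V) := by
    intro x hx y hy hxy
    simp only [Finset.coe_image, Set.mem_image, Finset.mem_coe] at hx hy
    obtain ⟨i, hi, rfl⟩ := hx
    obtain ⟨j, hj, rfl⟩ := hy
    have hij : i ≠ j := fun h => hxy (by rw [h])
    obtain ⟨x, hx, y, hy, hxy⟩ := hadj (w₁ := i) (w₂ := j) (by simpa using hij)
    rw [hSf i hi x hx, hSf j hj y hy] at hxy
    exact hxy
  have hSc : S.card ≤ G.cliqueNum := by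
    have := hcl.card_le_cliqueNum
    rwa [Finset.card_image_of_injective _ hginj] at this
  have hsum : ∑ i, (f i).toFinset.card ≤ Fintype.card V := by
    rw [← Finset.card_biUnion]
    · exact Finset.card_le_univ _
    · intro i _ j _ hij
      rw [Function.onFun, Set.disjoint_toFinset]
      exact hdis hij
  have hlow : ∑ i : Fin t, 2 ≤ ∑ i, ((f i).toFinset.card + if (f i).toFinset.card = 1 then 1 else 0) := by
    refine Finset.sum_le_sum fun i _ => ?_
    have : 0 < (f i).toFinset.card := Finset.card_pos.mpr ⟨g i, by simpa using hg i⟩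
    split_ifs <;> omega
  rw [Finset.sum_add_distrib, ← Finset.card_filter, ← hS] at hlow
  simp only [Finset.sum_const, Finset.card_univ, Fintype.card_fin, smul_eq_mul] at hlow
  omega

theorem hd_lower {V : Type*} [Fintype V] [Nonempty V] (G : SimpleGraph V)
    [DecidableRel G.Adj]
    (hn : G.cliqueNum + 2 * (Fintype.card V - G.minDegree - 1) ^ 2 + 2 ≤ Fintype.card V) :
    (SimpleGraph.completeGraph (Fin ((Fintype.card V + G.cliqueNum) / 2))).IsMinor G := by
  classical
  obtain ⟨K, hK⟩ := G.exists_isNClique_cliqueNum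
  set D := Fintype.card V - G.minDegree - 1 with hD
  have hdegH : ∀ v, Gᶜ.degree v ≤ D := by
    intro v
    rw [SimpleGraph.degree_compl]
    have := G.minDegree_le_degree v
    omega
  let A : V → V → Prop := fun u v => G.Adj u v ∧ ∀ w, w ≠ u → w ≠ v → G.Adj u w ∨ G.Adj v w
  have hbad : ∀ u, (Finset.univ.filter (fun v => ¬ A u v)).card ≤ 1 + D * D := by
    intro u
    have hsub : Finset.univ.filter (fun v => ¬ A u v) ⊆ {u} ∪ (Gᶜ.neighborFinset u).biUnion
        (fun x => insert x ((Gᶜ.neighborFinset x).erase u)) := by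
      intro v hv
      simp only [A, Finset.mem_filter, Finset.mem_univ, true_and, not_and_or, not_forall,
        not_or] at hv
      simp only [Finset.mem_union, Finset.mem_singleton, Finset.mem_biUnion,
        SimpleGraph.mem_neighborFinset, Finset.mem_insert, Finset.mem_erase,
        SimpleGraph.compl_adj]
      by_cases huv : v = u
      · exact Or.inl huv
      right
      rcases hv with hv | ⟨w, h1, h2, h3, h4⟩
      · exact ⟨v, ⟨Ne.symm huv, hv⟩, Or.inl rfl⟩
      · exact ⟨w, ⟨Ne.symm h1, h3⟩, Or.inr ⟨huv, h2, fun h => h4 h.symm⟩⟩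
    refine (Finset.card_le_card hsub).trans ((Finset.card_union_le _ _).trans ?_)
    rw [Finset.card_singleton]
    refine Nat.add_le_add_left ((Finset.card_biUnion_le_card_mul _ _ D ?_).trans ?_) 1
    · intro x hx
      refine (Finset.card_insert_le _ _).trans ?_
      rw [SimpleGraph.mem_neighborFinset] at hx
      have hm : u ∈ Gᶜ.neighborFinset x := by
        rw [SimpleGraph.mem_neighborFinset]; exact hx.symm
      rw [Finset.card_erase_add_one hm]
      exact hdegH x
    · exact Nat.mul_le_mul_right _ (hdegH u)
  have hRc : (Kᶜ).card = Fintype.card V - G.cliqueNum := by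
    rw [Finset.card_compl, hK.card_eq]
  set k := (Fintype.card V - G.cliqueNum) / 2 with hk
  obtain ⟨a, b, ha, hb, hab, haR, hbR, hA⟩ := hd_exists_matching Kᶜ A
    (fun u v h => ⟨h.1.symm, fun w h1 h2 => (h.2 w h2 h1).symm⟩)
    (fun u h => G.loopless.irrefl u h.1)
    (fun v _ => by
      have h1 := Finset.card_filter_add_card_filter_not (s := Kᶜ) (A v)
      have h2 : (Kᶜ.filter (fun w => ¬ A v w)).card ≤ _ :=
        (Finset.card_le_card (Finset.filter_subset_filter _ (Finset.subset_univ _))).trans (hbad v)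
      rw [pow_two] at hn
      omega) k (by omega)
  have hcard : Fintype.card (Fin ((Fintype.card V + G.cliqueNum) / 2)) =
      Fintype.card (K ⊕ Fin k) := by
    simp only [Fintype.card_fin, Fintype.card_sum, Fintype.card_coe, hK.card_eq]
    omega
  let e := Fintype.equivOfCardEq hcard
  let F : K ⊕ Fin k → Set V := Sum.elim (fun x => {x.1}) (fun i => {a i, b i})
  have hFd : ∀ p q, p ≠ q → Disjoint (F p) (F q) := by
    have haK : ∀ i, a i ∉ K := fun i => by simpa using haR i
    have hbK : ∀ i, b i ∉ K := fun i => by simpa using hbR i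
    rintro (x | i) (y | j) h
    · simp only [F, Sum.elim_inl, Set.disjoint_singleton]
      intro h'; exact h (by rw [Subtype.ext h'])
    · simp only [F, Sum.elim_inl, Sum.elim_inr, Set.disjoint_singleton_left, Set.mem_insert_iff,
        Set.mem_singleton_iff, not_or]
      exact ⟨fun h => haK j (h ▸ x.2), fun h => hbK j (h ▸ x.2)⟩
    · simp only [F, Sum.elim_inl, Sum.elim_inr, Set.disjoint_singleton_right, Set.mem_insert_iff,
        Set.mem_singleton_iff, not_or]
      exact ⟨fun h => haK i (h ▸ y.2), fun h => hbK i (h ▸ y.2)⟩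
    · have hij : i ≠ j := fun h' => h (by rw [h'])
      simp only [F, Sum.elim_inr, Set.disjoint_left, Set.mem_insert_iff, Set.mem_singleton_iff]
      rintro x (rfl | rfl) (h | h)
      · exact hij (ha h)
      · exact hab _ _ h
      · exact hab _ _ h.symm
      · exact hij (hb h)
  have hdom : ∀ i x, x ∉ F (Sum.inr i) → ∃ y ∈ F (Sum.inr i), G.Adj y x := by
    intro i x hx
    simp only [F, Sum.elim_inr, Set.mem_insert_iff, Set.mem_singleton_iff, not_or] at hx
    rcases (hA i).2 x hx.1 hx.2 with h | h
    · exact ⟨a i, by simp [F], h⟩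
    · exact ⟨b i, by simp [F], h⟩
  have hFn : ∀ p, (F p).Nonempty := by
    rintro (x | i)
    · exact ⟨x.1, by simp [F]⟩
    · exact ⟨a i, by simp [F]⟩
  refine ⟨fun w => F (e w), fun w => hFn _, ?_, ?_, ?_⟩
  · intro w
    show (G.induce (F (e w))).Connected
    generalize e w = p
    rcases p with x | i
    · rw [SimpleGraph.connected_iff]
      refine ⟨?_, (hFn _).to_subtype⟩
      rintro ⟨u, hu⟩ ⟨v, hv⟩
      simp only [F, Sum.elim_inl, Set.mem_singleton_iff] at hu hv
      subst hu
      subst hv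
      exact SimpleGraph.Reachable.refl _
    · exact SimpleGraph.induce_pair_connected_of_adj (hA i).1
  · intro w₁ w₂ h
    exact hFd _ _ (fun h' => h (e.injective h'))
  · intro w₁ w₂ h
    have hne : e w₁ ≠ e w₂ := fun h' => h.ne (e.injective h')
    show ∃ v₁ ∈ F (e w₁), ∃ v₂ ∈ F (e w₂), G.Adj v₁ v₂
    revert hne
    generalize e w₁ = p
    generalize e w₂ = q
    intro hne
    have hd := hFd _ _ hne
    rcases p with x | i
    · rcases q with y | j
      · refine ⟨x.1, by simp [F], y.1, by simp [F], hK.isClique x.2 y.2 ?_⟩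
        intro h'; exact hne (by rw [Subtype.ext h'])
      · obtain ⟨x, hx⟩ := hFn (Sum.inl x)
        obtain ⟨y, hy, h⟩ := hdom j x (Set.disjoint_left.mp hd hx)
        exact ⟨x, hx, y, hy, h.symm⟩
    · obtain ⟨x, hx⟩ := hFn q
      obtain ⟨y, hy, h⟩ := hdom i x (Set.disjoint_right.mp hd hx)
      exact ⟨y, hy, x, hx, h⟩

/-- If `G` has `n` vertices, minimum degree `δ`, clique number `ω`, and
`Δ = n - δ - 1` satisfies `n ≥ ω + 2Δ² + 2`, then the Hadwiger number of `G`
equals `⌊(n + ω)/2⌋`. -/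
theorem hadwigerNumber_of_dense {V : Type*} [Fintype V] [Nonempty V] (G : SimpleGraph V)
    [DecidableRel G.Adj]
    (hn : G.cliqueNum + 2 * (Fintype.card V - G.minDegree - 1) ^ 2 + 2 ≤ Fintype.card V) :
    G.hadwigerNumber = (Fintype.card V + G.cliqueNum) / 2 := by
  refine IsGreatest.csSup_eq ⟨hd_lower G hn, fun t ht => ?_⟩
  have := hd_upper G t ht
  omega
end

section
/- For every nonnegative integer s, every graph G whose number of vertices n(G) plus clique number ω(G) satisfies n(G) + ω(G) ≤ s has at most 3^{s/3} cliques. -/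
open Classical in
theorem clique_aux {V : Type*} [Fintype V] (G : SimpleGraph V) (r : ℝ) (hr : 1 ≤ r)
    (hm : ∀ m : ℕ, (m : ℝ) ≤ r ^ m) (N : ℕ) : ∀ (A : Finset V) (k : ℕ), A.card + k ≤ N →
    (∀ C : Finset V, C ⊆ A → G.IsClique (C : Set V) → C.card ≤ k) →
    ((A.powerset.filter fun C : Finset V => G.IsClique (C : Set V)).card : ℝ) ≤ r ^ N := by
  induction N using Nat.strong_induction_on with
  | _ N ih =>
  intro A k hAk hk
  rcases A.eq_empty_or_nonempty with rfl | hA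
  · have h1 : ((∅ : Finset V).powerset.filter fun C : Finset V => G.IsClique (C : Set V)).card ≤ 1 :=
      (Finset.card_filter_le _ _).trans (by simp)
    calc (_ : ℝ) ≤ 1 := by exact_mod_cast h1
      _ ≤ r ^ N := one_le_pow₀ hr
  · obtain ⟨v, hv, hmax⟩ := A.exists_max_image (fun w => (A.filter (G.Adj w)).card) hA
    let M := A.filter (fun w => ¬ G.Adj v w)
    have hcard : (A.filter (G.Adj v)).card + M.card = A.card :=
      Finset.card_filter_add_card_filter_not _
    have hMpos : 0 < M.card := Finset.card_pos.mpr ⟨v, by simp [M, hv]⟩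
    have hk1 : 1 ≤ k := by
      have := hk {v} (by simpa using hv) (by simp)
      simpa using this
    let c : Finset V → Finset (Finset V) :=
      fun A => A.powerset.filter fun C : Finset V => G.IsClique (C : Set V)
    have hc : ∀ w ∈ A, ((c (A.filter (G.Adj w))).card : ℝ) ≤ r ^ (N - (M.card + 1)) := by
      intro w hw
      have hwm := hmax w hw

      refine ih (N - (M.card + 1)) (by omega) _ (k - 1) (by omega) ?_
      intro C hC hCl
      have hwC : w ∉ C := fun hh => by simpa using hC hh
      have := hk (insert w C) ?_ ?_
      · rw [Finset.card_insert_of_notMem hwC] at this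
        omega
      · intro x hx
        rcases Finset.mem_insert.1 hx with rfl | hx
        · exact hw
        · exact (Finset.mem_filter.1 (hC hx)).1
      · rw [Finset.coe_insert]
        exact hCl.insert fun b hb _ => (Finset.mem_filter.1 (hC hb)).2
    have hsub : c A ⊆ c (A.filter (G.Adj v)) ∪
        M.biUnion fun w => (c (A.filter (G.Adj w))).image (insert w) := by
      intro C hC
      obtain ⟨hCA, hCl⟩ := Finset.mem_filter.1 hC
      rw [Finset.mem_powerset] at hCA
      by_cases hx : ∃ w ∈ C, ¬ G.Adj v w
      · obtain ⟨w, hw, hvw⟩ := hx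
        refine Finset.mem_union_right _ (Finset.mem_biUnion.2
          ⟨w, Finset.mem_filter.2 ⟨hCA hw, hvw⟩, Finset.mem_image.2
          ⟨C.erase w, Finset.mem_filter.2 ⟨Finset.mem_powerset.2 ?_, ?_⟩,
            Finset.insert_erase hw⟩⟩)
        · intro x hx
          obtain ⟨h1, h2⟩ := Finset.mem_erase.1 hx
          exact Finset.mem_filter.2 ⟨hCA h2, hCl hw h2 h1.symm⟩
        · exact hCl.subset (by exact_mod_cast Finset.erase_subset w C)
      · push Not at hx
        refine Finset.mem_union_left _ (Finset.mem_filter.2 ⟨Finset.mem_powerset.2 ?_, hCl⟩)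
        intro x h
        exact Finset.mem_filter.2 ⟨hCA h, hx x h⟩
    have hle : (c A).card ≤ (c (A.filter (G.Adj v))).card +
        ∑ w ∈ M, (c (A.filter (G.Adj w))).card :=
      (Finset.card_le_card hsub).trans ((Finset.card_union_le _ _).trans
        (Nat.add_le_add_left (Finset.card_biUnion_le.trans
          (Finset.sum_le_sum fun w _ => Finset.card_image_le)) _))
    have hle' : ((c A).card : ℝ) ≤ (c (A.filter (G.Adj v))).card +
        ∑ w ∈ M, ((c (A.filter (G.Adj w))).card : ℝ) := by exact_mod_cast hle
    have hsum : ∑ w ∈ M, ((c (A.filter (G.Adj w))).card : ℝ) ≤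
        M.card * r ^ (N - (M.card + 1)) := by
      rw [← nsmul_eq_mul]
      exact Finset.sum_le_card_nsmul _ _ _ fun w hw => hc w (Finset.mem_filter.1 hw).1
    have hpow : r ^ N = r ^ (M.card + 1) * r ^ (N - (M.card + 1)) := by
      rw [← pow_add]; congr 1; omega
    have hfin := mul_le_mul_of_nonneg_right (hm (M.card + 1))
      (pow_nonneg (zero_le_one.trans hr) (N - (M.card + 1)))
    push_cast at hfin
    have := hc v hv
    change ((c A).card : ℝ) ≤ _
    rw [hpow]
    linarith

theorem cube_le_aux (m : ℕ) : m ^ 3 ≤ 3 ^ m := by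
  rcases lt_or_ge m 3 with h | h
  · interval_cases m <;> norm_num
  · induction m, h using Nat.le_induction with
    | base => norm_num
    | succ n hn ih =>
      rw [pow_succ 3 n]
      nlinarith [mul_le_mul hn hn (by norm_num) (by omega), Nat.mul_le_mul_right (n*n) hn]

/-- Every graph `G` with `n(G) + ω(G) ≤ s` has at most `3 ^ (s/3)` cliques. -/
theorem cliqueCount_le_of_card_add_cliqueNum_le (s : ℕ) {V : Type*} [Fintype V]
    (G : SimpleGraph V) (h : Fintype.card V + G.cliqueNum ≤ s) :
    (G.cliqueCount : ℝ) ≤ 3 ^ ((s : ℝ) / 3) := by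
  classical
  have hr3 : ∀ m : ℕ, ((3 : ℝ) ^ ((1 : ℝ) / 3)) ^ m = 3 ^ ((m : ℝ) / 3) := by
    intro m
    rw [← Real.rpow_natCast, ← Real.rpow_mul (by norm_num)]
    congr 1; ring
  rw [← hr3]
  have hcount : G.cliqueCount =
      ((Finset.univ : Finset V).powerset.filter fun C : Finset V => G.IsClique (C : Set V)).card := by
    unfold SimpleGraph.cliqueCount
    rw [Nat.card_eq_fintype_card, Fintype.card_subtype]
    simp
  rw [hcount]
  convert clique_aux G ((3 : ℝ) ^ ((1 : ℝ) / 3)) (Real.one_le_rpow (by norm_num) (by norm_num)) ?_ s Finset.univ G.cliqueNum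
    (by simpa using h) ?_ using 3
  · intro m
    have h3 : ((3 : ℝ) ^ ((1 : ℝ) / 3)) ^ 3 = 3 := by rw [hr3]; norm_num
    refine le_of_pow_le_pow_left₀ (n := 3) (by norm_num) (by positivity) ?_
    rw [← pow_mul, mul_comm, pow_mul, h3]
    exact_mod_cast cube_le_aux m
  · intro C _ hC
    exact hC.card_le_cliqueNum
end

section
/- Let α* = (2−√2)/2 − 0.001. If I is an independent set in a graph G all of whose vertices are good (i.e., every v ∈ I lies in a fraction at least α* of the cliques of G), then |I| ≤ 2. -/
/-- `α* = (2 - √2)/2 - 0.001`. -/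
noncomputable def alphaStar : ℝ := (2 - Real.sqrt 2) / 2 - 0.001

/-- An independent set all of whose vertices are good (each lies in a fraction at least
`α*` of the cliques) has at most two vertices. -/
theorem indepSet_of_good_vertices_small {V : Type*} [Fintype V]
    (G : SimpleGraph V) (I : Finset V)
    (hI : (I : Set V).Pairwise fun u v => ¬ G.Adj u v)
    (hgood : ∀ v ∈ I, alphaStar ≤ (G.cliqueCountOn v : ℝ) / G.cliqueCount) :
    I.card ≤ 2 := by
  classical
  by_contra hcon
  obtain ⟨a, b, c, ha, hb, hc, hab, hac, hbc⟩ := Finset.two_lt_card_iff.mp (not_le.mp hcon)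
  have nab := hI ha hb hab
  have nac := hI ha hc hac
  have nbc := hI hb hc hbc
  let F : Finset (Finset V) := Finset.univ.filter fun s => G.IsClique (s : Set V)
  let A : V → Finset (Finset V) := fun v =>
    Finset.univ.filter fun s => G.IsClique (s : Set V) ∧ v ∈ s
  let E : Finset (Finset V) := (A a).image fun s => s.erase a
  have hF : G.cliqueCount = F.card := by
    unfold SimpleGraph.cliqueCount
    rw [Nat.card_eq_fintype_card, Fintype.card_subtype]
  have hA : ∀ v, G.cliqueCountOn v = (A v).card := by
    intro v
    unfold SimpleGraph.cliqueCountOn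
    rw [Nat.card_eq_fintype_card, Fintype.card_subtype]
  have hE : E.card = (A a).card := by
    apply Finset.card_image_of_injOn
    intro s hs t ht h
    have hs' : a ∈ s := by simp [A] at hs; exact hs.2
    have ht' : a ∈ t := by simp [A] at ht; exact ht.2
    simp only at h
    rw [← Finset.insert_erase hs', ← Finset.insert_erase ht', h]
  have key : ∀ u v, u ≠ v → ¬ G.Adj u v → Disjoint (A u) (A v) := by
    intro u v huv h
    rw [Finset.disjoint_left]
    intro s hs ht
    simp [A] at hs ht
    exact h (hs.1 hs.2 ht.2 huv)
  have hEmem : ∀ s ∈ E, G.IsClique (s : Set V) ∧ a ∉ s ∧ b ∉ s ∧ c ∉ s := by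
    intro s hs
    obtain ⟨t, ht, rfl⟩ := Finset.mem_image.mp hs
    simp only [A, Finset.mem_filter, Finset.mem_univ, true_and] at ht
    refine ⟨ht.1.subset (by simp), by simp, ?_, ?_⟩
    · intro h
      exact nab (ht.1 ht.2 (Finset.mem_of_mem_erase h) hab)
    · intro h
      exact nac (ht.1 ht.2 (Finset.mem_of_mem_erase h) hac)
  have hEA : Disjoint E (A a ∪ (A b ∪ A c)) := by
    rw [Finset.disjoint_left]
    intro s hs ht
    have := hEmem s hs
    simp [A] at ht
    tauto
  have hd1 : Disjoint (A a) (A b ∪ A c) :=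
    Finset.disjoint_union_right.mpr ⟨key a b hab nab, key a c hac nac⟩
  have hsub : E ∪ (A a ∪ (A b ∪ A c)) ⊆ F := by
    intro s hs
    rcases Finset.mem_union.mp hs with h | h
    · simpa [F] using (hEmem s h).1
    · simp [A] at h
      simp [F]
      tauto
  have hle := Finset.card_le_card hsub
  rw [Finset.card_union_of_disjoint hEA, Finset.card_union_of_disjoint hd1,
    Finset.card_union_of_disjoint (key b c hbc nbc), hE] at hle
  have hpos : 0 < F.card := Finset.card_pos.mpr ⟨∅, by simp [F]⟩
  have hposR : (0 : ℝ) < F.card := by exact_mod_cast hpos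
  have hleR : ((A a).card : ℝ) + ((A a).card + ((A b).card + (A c).card)) ≤ F.card := by
    exact_mod_cast hle
  have ga := hgood a ha
  have gb := hgood b hb
  have gc := hgood c hc
  rw [hA, hF, le_div_iff₀ hposR] at ga gb gc
  have hs : Real.sqrt 2 < 1.42 := by
    rw [Real.sqrt_lt' (by norm_num)]
    norm_num
  have hal : (0.28 : ℝ) < alphaStar := by
    unfold alphaStar
    linarith
  nlinarith [mul_lt_mul_of_pos_right hal hposR]
end

section
/- Let H be a connected graph on t vertices and let x be the number of edges of a maximum matching in the complement of H. Let G' be an H-minor-free graph whose complement has maximum degree at most one. If x < (2 − 3/log₂3)·t, then G' has fewer than 3^{(2t−x)/3} cliques; if x ≥ (2 − 3/log₂3)·t, then G' has fewer than 2^t cliques. -/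
open Classical in
theorem aux_sigma {V : Type*} [Fintype V] (G : SimpleGraph V)
    (hdeg : ∀ v : V, (Gᶜ.neighborSet v).ncard ≤ 1) :
    ∃ σ : V → V, (∀ v, σ (σ v) = v) ∧ ∀ u v, G.Adj u v ↔ v ≠ u ∧ v ≠ σ u := by
  have h : ∀ v, ∃ w, ∀ u, G.Adj v u ↔ u ≠ v ∧ u ≠ w := by
    intro v
    have h1 := hdeg v
    rw [Set.ncard_le_one_iff] at h1
    by_cases he : ∃ w, Gᶜ.Adj v w
    · obtain ⟨w, hw⟩ := he
      refine ⟨w, fun u => ⟨fun hu => ⟨hu.ne', ?_⟩, fun hu => ?_⟩⟩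
      · rintro rfl
        rw [SimpleGraph.compl_adj] at hw
        exact hw.2 hu
      · by_contra hn
        exact hu.2 (h1 (a := u) (b := w) (by simp [SimpleGraph.compl_adj, hn, hu.1.symm]) hw)
    · refine ⟨v, fun u => ⟨fun hu => ⟨hu.ne', hu.ne'⟩, fun hu => ?_⟩⟩
      by_contra hn
      exact he ⟨u, by simp [SimpleGraph.compl_adj, hn, hu.1.symm]⟩
  choose σ hσ using h
  refine ⟨σ, fun v => ?_, hσ⟩
  by_cases hv : σ v = v
  · simp [hv]
  · by_contra hc
    have := (hσ (σ v) v).2 ⟨fun h => hv h.symm, fun h => hc h.symm⟩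
    exact ((hσ v (σ v)).1 this.symm).2 rfl

open Classical in
theorem aux_rep {V : Type*} [Fintype V] (σ : V → V) (hσ : ∀ v, σ (σ v) = v) :
    ∃ (p q : ℕ) (a : Fin p → V) (c : Fin q → V), Function.Injective a ∧ Function.Injective c ∧
      (∀ i k, σ (a i) ≠ a k) ∧ (∀ i, σ (c i) = c i) ∧
      (∀ v, (∃ i, a i = v) ∨ (∃ i, σ (a i) = v) ∨ ∃ i, c i = v) := by
  let e := Fintype.equivFin V
  let A := {v : V // e v < e (σ v)}
  let Q := {v : V // σ v = v}
  refine ⟨Fintype.card A, Fintype.card Q, fun i => ((Fintype.equivFin A).symm i).1,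
    fun i => ((Fintype.equivFin Q).symm i).1, ?_, ?_, ?_, ?_, ?_⟩
  · exact Subtype.val_injective.comp (Equiv.injective _)
  · exact Subtype.val_injective.comp (Equiv.injective _)
  · intro i k h
    have h1 := ((Fintype.equivFin A).symm i).2
    have h2 := ((Fintype.equivFin A).symm k).2
    have h' : σ ((Fintype.equivFin A).symm i).1 = ((Fintype.equivFin A).symm k).1 := h
    rw [← h', hσ] at h2
    exact absurd h1 (not_lt_of_gt h2)
  · intro i
    exact ((Fintype.equivFin Q).symm i).2
  · intro v
    rcases lt_trichotomy (e v) (e (σ v)) with h | h | h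
    · exact Or.inl ⟨Fintype.equivFin A ⟨v, h⟩, by simp⟩
    · exact Or.inr (Or.inr ⟨Fintype.equivFin Q ⟨v, (e.injective h).symm⟩, by simp⟩)
    · exact Or.inr (Or.inl ⟨Fintype.equivFin A ⟨σ v, by rw [hσ]; exact h⟩, by simp [hσ]⟩)

open Classical in
theorem aux_count {V : Type*} [Fintype V] (G : SimpleGraph V) (σ : V → V)
    (hadj : ∀ u v, G.Adj u v ↔ v ≠ u ∧ v ≠ σ u) {p q : ℕ} (a : Fin p → V) (c : Fin q → V)
    (hs : ∀ i k, σ (a i) ≠ a k)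
    (hcov : ∀ v, (∃ i, a i = v) ∨ (∃ i, σ (a i) = v) ∨ ∃ i, c i = v) :
    G.cliqueCount ≤ 3 ^ p * 2 ^ q := by
  unfold SimpleGraph.cliqueCount
  let F : {s : Finset V // G.IsClique (s : Set V)} → (Fin p → Fin 3) × (Fin q → Bool) := fun s =>
    (fun i => if a i ∈ s.1 then 0 else if σ (a i) ∈ s.1 then 1 else 2, fun i => decide (c i ∈ s.1))
  have hF : Function.Injective F := by
    intro s s' h
    have h1 : ∀ i, (if a i ∈ s.1 then (0 : Fin 3) else if σ (a i) ∈ s.1 then 1 else 2) =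
        if a i ∈ s'.1 then 0 else if σ (a i) ∈ s'.1 then 1 else 2 :=
      fun i => congrFun (congrArg Prod.fst h) i
    have h2 : ∀ i, decide (c i ∈ s.1) = decide (c i ∈ s'.1) :=
      fun i => congrFun (congrArg Prod.snd h) i
    have key : ∀ (s : {s : Finset V // G.IsClique (s : Set V)}) i,
        ¬ (a i ∈ s.1 ∧ σ (a i) ∈ s.1) := by
      rintro s i ⟨x1, x2⟩
      have := s.2 x1 x2 (hs i i).symm
      exact ((hadj _ _).1 this).2 rfl
    apply Subtype.ext
    ext v
    rcases hcov v with ⟨i, rfl⟩ | ⟨i, rfl⟩ | ⟨i, rfl⟩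
    · have := h1 i
      split_ifs at this <;> simp_all
    · have := h1 i
      have := key s i
      have := key s' i
      split_ifs at * <;> simp_all
    · have := h2 i
      simpa using this
  have := Nat.card_le_card_of_injective F hF
  simpa using this

open Classical in
theorem aux_matching {W : Type*} [Fintype W] (H : SimpleGraph W) :
    ∃ m : Fin (Hᶜ.matchingNumber) × Bool → W, Function.Injective m ∧
      ∀ i b b', ¬ H.Adj (m (i, b)) (m (i, b')) := by
  have hmem : Hᶜ.matchingNumber ∈ {k | ∃ M : Hᶜ.Subgraph, M.IsMatching ∧ M.edgeSet.ncard = k} := by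
    apply Nat.sSup_mem
    · exact ⟨0, ⊥, by intro v hv; simp at hv, by simp⟩
    · refine ⟨(Set.univ : Set (Sym2 W)).ncard, ?_⟩
      rintro k ⟨M, -, rfl⟩
      exact Set.ncard_le_ncard (Set.subset_univ _) (Set.toFinite _)
  obtain ⟨M, hM, hk⟩ := hmem
  have e : Fin (Hᶜ.matchingNumber) ≃ M.edgeSet := by
    apply Classical.choice
    rw [← hk]
    exact ⟨(Finite.equivFinOfCardEq (by rw [Nat.card_coe_set_eq])).symm⟩
  have hadj : ∀ i, M.Adj (Quot.out (e i).1).1 (Quot.out (e i).1).2 := by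
    intro i
    have := (e i).2
    rw [← SimpleGraph.Subgraph.mem_edgeSet]
    convert this
    exact Quot.out_eq _
  have hmk : ∀ i, s((Quot.out (e i).1).1, (Quot.out (e i).1).2) = (e i).1 :=
    fun i => Quot.out_eq _
  let m : Fin (Hᶜ.matchingNumber) × Bool → W := fun x =>
    if x.2 then (Quot.out (e x.1).1).1 else (Quot.out (e x.1).1).2
  have hm : ∀ i b, M.Adj (m (i, b)) (m (i, !b)) := by
    intro i b
    cases b
    · simpa [m] using (hadj i).symm
    · simpa [m] using (hadj i)
  have hms : ∀ i b, s(m (i, b), m (i, !b)) = (e i).1 := by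
    intro i b
    cases b
    · rw [Sym2.eq_swap]; simpa [m] using hmk i
    · simpa [m] using hmk i
  refine ⟨m, ?_, ?_⟩
  · rintro ⟨i, b⟩ ⟨k, b'⟩ h
    have h1 := hm i b
    have h2 := hm k b'
    have h3 : m (i, !b) = m (k, !b') := by
      rw [h] at h1
      exact (hM (M.edge_vert h1)).unique h1 h2
    have h4 : i = k := by
      apply e.injective
      apply Subtype.ext
      rw [← hms i b, ← hms k b', h, h3]
    subst h4
    by_cases hb : b = b'
    · rw [hb]
    · exfalso
      have : b' = !b := by cases b <;> cases b' <;> simp_all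
      subst this
      exact h1.ne h
  · intro i b b' hh
    by_cases hb : b = b'
    · subst hb; exact hh.ne rfl
    · have : b' = !b := by cases b <;> cases b' <;> simp_all
      subst this
      have := (hm i b).adj_sub
      rw [SimpleGraph.compl_adj] at this
      exact this.2 hh

open Classical in
theorem aux_inj {W : Type*} [Fintype W] (H : SimpleGraph W) {j : ℕ} (m : Fin j × Bool → W)
    (hm : Function.Injective m) (hn : ∀ i b b', ¬ H.Adj (m (i, b)) (m (i, b')))
    (R : Type) [Fintype R] (hR : Fintype.card W ≤ 2 * j + Fintype.card R) :
    ∃ g : W → (Fin j × Bool) ⊕ R, Function.Injective g ∧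
      ∀ w w' i b b', g w = Sum.inl (i, b) → g w' = Sum.inl (i, b') → ¬ H.Adj w w' := by
  have hc : Fintype.card {w // w ∉ Set.range m} ≤ Fintype.card R := by
    rw [Fintype.card_subtype_compl]
    have : Fintype.card {w // w ∈ Set.range m} = j * 2 := by
      rw [← Fintype.card_congr (Equiv.ofInjective m hm)]; simp
    omega
  obtain ⟨φ⟩ := Function.Embedding.nonempty_of_card_le hc
  let g : W → (Fin j × Bool) ⊕ R := fun w =>
    if h : w ∈ Set.range m then Sum.inl h.choose else Sum.inr (φ ⟨w, h⟩)
  have hg : ∀ w y, g w = Sum.inl y → m y = w := by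
    intro w y h
    by_cases hw : w ∈ Set.range m
    · simp only [g, dif_pos hw, Sum.inl.injEq] at h
      rw [← h]; exact hw.choose_spec
    · simp only [g, dif_neg hw, reduceCtorEq] at h
  refine ⟨g, ?_, ?_⟩
  · intro w w' h
    rcases hy : g w with y | y
    · rw [← hg w y hy, hg w' y (h ▸ hy)]
    · have hy' := h ▸ hy
      by_cases hw : w ∈ Set.range m
      · simp only [g, dif_pos hw, reduceCtorEq] at hy
      by_cases hw' : w' ∈ Set.range m
      · simp only [g, dif_pos hw', reduceCtorEq] at hy'
      simp only [g, dif_neg hw, Sum.inr.injEq] at hy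
      simp only [g, dif_neg hw', Sum.inr.injEq] at hy'
      have := φ.injective (hy.trans hy'.symm)
      simpa using this
  · intro w w' i b b' h h'
    rw [← hg _ _ h, ← hg _ _ h']
    exact hn i b b'

def auxR1 {V : Type*} (σ : V → V) {p q : ℕ} (a : Fin p → V) (c : Fin q → V) {j m : ℕ}
    (hj : j ≤ p) (hm : j + 2 * m ≤ p) :
    (Fin j × Bool) ⊕ (Fin (p - j) ⊕ (Fin m ⊕ Fin q)) → V
  | Sum.inl (i, true) => a ⟨i, by omega⟩
  | Sum.inl (i, false) => σ (a ⟨i, by omega⟩)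
  | Sum.inr (Sum.inl i) => a ⟨j + i, by omega⟩
  | Sum.inr (Sum.inr (Sum.inl i)) => σ (a ⟨j + 2 * i, by omega⟩)
  | Sum.inr (Sum.inr (Sum.inr i)) => c i

def auxR2 {V : Type*} (σ : V → V) {p q : ℕ} (a : Fin p → V) (c : Fin q → V) {j m : ℕ}
    (hj : j ≤ p) (hm : j + 2 * m ≤ p) :
    (Fin j × Bool) ⊕ (Fin (p - j) ⊕ (Fin m ⊕ Fin q)) → V
  | Sum.inl (i, true) => a ⟨i, by omega⟩
  | Sum.inl (i, false) => σ (a ⟨i, by omega⟩)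
  | Sum.inr (Sum.inl i) => a ⟨j + i, by omega⟩
  | Sum.inr (Sum.inr (Sum.inl i)) => σ (a ⟨j + 2 * i + 1, by omega⟩)
  | Sum.inr (Sum.inr (Sum.inr i)) => c i

theorem aux_minor {W V : Type*} (H : SimpleGraph W) (G : SimpleGraph V) (σ : V → V)
    (hσ : ∀ v, σ (σ v) = v)
    (hadj : ∀ u v, G.Adj u v ↔ v ≠ u ∧ v ≠ σ u) {p q : ℕ} (a : Fin p → V) (c : Fin q → V)
    (ha : Function.Injective a) (hc : Function.Injective c)
    (hs : ∀ i k, σ (a i) ≠ a k) (hcc : ∀ i, σ (c i) = c i)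
    {j m : ℕ} (hj : j ≤ p) (hm : j + 2 * m ≤ p)
    (g : W → (Fin j × Bool) ⊕ (Fin (p - j) ⊕ (Fin m ⊕ Fin q))) (hg : Function.Injective g)
    (hH : ∀ w w' i b b', g w = Sum.inl (i, b) → g w' = Sum.inl (i, b') → ¬ H.Adj w w') :
    H.IsMinor G := by
  have e1 : ∀ i k, a i = a k ↔ i = k := fun i k => ha.eq_iff
  have e2 : ∀ i k, c i = c k ↔ i = k := fun i k => hc.eq_iff
  have e3 : ∀ u v, σ u = σ v ↔ u = v :=
    fun u v => ⟨fun h => by rw [← hσ u, h, hσ], fun h => by rw [h]⟩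
  have e4 : ∀ i k, a i ≠ c k := by
    intro i k h
    apply hs i i
    rw [h, hcc]
  have e5 : ∀ i k, σ (a i) ≠ c k := by
    intro i k h
    apply e4 i k
    rw [← hσ (a i), h, hcc]
  have e4' : ∀ i k, c k ≠ a i := fun i k h => e4 i k h.symm
  have e5' : ∀ i k, c k ≠ σ (a i) := fun i k h => e5 i k h.symm
  have hs' : ∀ i k, a k ≠ σ (a i) := fun i k h => hs i k h.symm
  let r1 := auxR1 σ a c hj hm
  let r2 := auxR2 σ a c hj hm
  have hin : ∀ b, r1 b = r2 b ∨ G.Adj (r1 b) (r2 b) := by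
    rintro (⟨i, _ | _⟩ | i | i | i) <;>
      simp [r1, r2, auxR1, auxR2, hadj, e1, e3, hσ, hs, hs', e4, e5, e4', e5']
  have hd : ∀ b b', b ≠ b' → r1 b ≠ r1 b' ∧ r1 b ≠ r2 b' ∧ r2 b ≠ r1 b' ∧ r2 b ≠ r2 b' := by
    rintro (⟨i, _ | _⟩ | i | i | i) (⟨i', _ | _⟩ | i' | i' | i') <;>
      simp [r1, r2, auxR1, auxR2, hadj, e1, e2, e3, hσ, hs, hs', e4, e5, e4', e5', Fin.ext_iff] <;>
      omega
  have hA : ∀ b b', b ≠ b' → (∀ i d d', b = Sum.inl (i, d) → b' ≠ Sum.inl (i, d')) →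
      G.Adj (r1 b) (r1 b') ∨ G.Adj (r1 b) (r2 b') ∨ G.Adj (r2 b) (r1 b') := by
    rintro (⟨i, _ | _⟩ | i | i | i) (⟨i', _ | _⟩ | i' | i' | i') <;>
      simp [r1, r2, auxR1, auxR2, hadj, e1, e2, e3, hcc, hσ, hs, hs', e4, e5, e4', e5',
        Fin.ext_iff] <;>
      grind
  refine ⟨fun w => {r1 (g w), r2 (g w)}, fun w => ⟨r1 (g w), by simp⟩, fun w => ?_, ?_, ?_⟩
  · rcases hin (g w) with h | h
    · beta_reduce
      rw [← h, Set.pair_eq_singleton]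
      exact SimpleGraph.Connected.of_subsingleton
    · exact SimpleGraph.induce_pair_connected_of_adj h
  · intro w w' hw
    have := hd _ _ (hg.ne hw)
    rw [Set.disjoint_left]
    rintro v (rfl | rfl) <;> simp [this]
  · intro w w' hw
    rcases hA (g w) (g w') (hg.ne hw.ne) (fun i d d' h h' => hH _ _ i d d' h h' hw) with h | h | h
    · exact ⟨_, by simp, _, by simp, h⟩
    · exact ⟨_, by simp, _, Set.mem_insert_of_mem _ rfl, h⟩
    · exact ⟨_, Set.mem_insert_of_mem _ rfl, _, Set.mem_insert _ _, h⟩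

theorem aux_num {p q t x : ℕ} (h : x < p) (hN : 2 * q + 3 * p + x + 1 ≤ 2 * t) :
    (3 ^ p * 2 ^ q : ℝ) < 3 ^ (((2 * t - x : ℝ)) / 3) := by
  have h0 : (0 : ℝ) < 3 ^ (((2 * t - x : ℝ)) / 3) := by positivity
  apply lt_of_pow_lt_pow_left₀ 3 h0.le
  rw [← Real.rpow_natCast (3 ^ (((2 * t - x : ℝ)) / 3)) 3, ← Real.rpow_mul (by norm_num)]
  have e : ((2 * t - x : ℝ)) / 3 * ((3 : ℕ) : ℝ) = ((2 * t - x : ℕ) : ℝ) := by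
    rw [Nat.cast_sub (by omega)]; push_cast; ring
  rw [e, Real.rpow_natCast]
  calc ((3 ^ p * 2 ^ q : ℝ)) ^ 3 = 3 ^ (3 * p) * 8 ^ q := by
        rw [mul_pow, ← pow_mul, ← pow_mul, mul_comm p 3, mul_comm q 3, pow_mul 2 3 q]; norm_num
    _ ≤ 3 ^ (3 * p) * 9 ^ q := by gcongr; norm_num
    _ = 3 ^ (3 * p + 2 * q) := by rw [pow_add, pow_mul 3 2 q]; norm_num
    _ < 3 ^ (2 * t - x) := by
        apply pow_lt_pow_right₀ (by norm_num); omega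

theorem aux_log (t x : ℕ) : (x : ℝ) < (2 - 3 / Real.logb 2 3) * t ↔
    (2 : ℝ) ^ t < 3 ^ (((2 * t - x : ℝ)) / 3) := by
  have h2 : 0 < Real.log 2 := Real.log_pos (by norm_num)
  have h3 : 0 < Real.log 3 := Real.log_pos (by norm_num)
  rw [← Real.log_lt_log_iff (x := (2 : ℝ) ^ t) (by positivity) (by positivity), Real.log_pow,
    Real.log_rpow (by norm_num), Real.logb]
  have : (2 - 3 / (Real.log 3 / Real.log 2)) * t - x =
    3 / Real.log 3 * ((2 * t - x) / 3 * Real.log 3 - t * Real.log 2) := by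
    field_simp
    ring
  rw [← sub_pos, this, mul_pos_iff_of_pos_left (by positivity), sub_pos]


/-- Let `H` be connected on `t` vertices with `x` the maximum matching size in its
complement, and let `G'` be an `H`-minor-free graph whose complement has maximum degree
at most one. If `x < (2 - 3/log₂ 3) t` then `G'` has fewer than `3 ^ ((2t - x)/3)`
cliques; if `x ≥ (2 - 3/log₂ 3) t` then `G'` has fewer than `2 ^ t` cliques. -/
theorem cliqueCount_of_missing_matching {W : Type*} [Fintype W] (H : SimpleGraph W)
    (hconn : H.Connected) (t : ℕ) (ht : Fintype.card W = t) (x : ℕ)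
    (hx : Hᶜ.matchingNumber = x)
    {V : Type*} [Fintype V] (G' : SimpleGraph V) (hfree : ¬ H.IsMinor G')
    (hdeg : ∀ v : V, (G'ᶜ.neighborSet v).ncard ≤ 1) :
    ((x : ℝ) < (2 - 3 / Real.logb 2 3) * t →
        (G'.cliqueCount : ℝ) < 3 ^ (((2 * t - x : ℝ)) / 3)) ∧
    ((2 - 3 / Real.logb 2 3) * t ≤ (x : ℝ) →
        (G'.cliqueCount : ℝ) < 2 ^ t) := by
  obtain ⟨σ, hσ, hadj⟩ := aux_sigma G' hdeg
  obtain ⟨p, q, a, c, ha, hc, hs, hcc, hcov⟩ := aux_rep σ hσ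
  have hcount := aux_count G' σ hadj a c hs hcov
  obtain ⟨m, hm, hn⟩ := aux_matching H
  have hN : 2 * min p x + ((p - min p x) + ((p - min p x) / 2 + q)) < t := by
    by_contra hlt
    apply hfree
    have hjx : min p x ≤ Hᶜ.matchingNumber := by omega
    obtain ⟨g, hg, hgH⟩ := aux_inj H (j := min p x)
      (fun y => m (Fin.castLE hjx y.1, y.2))
      (by
        rintro ⟨i, b⟩ ⟨k, b'⟩ h
        have := hm h
        simpa using this)
      (fun i b b' => hn _ b b')
      (Fin (p - min p x) ⊕ (Fin ((p - min p x) / 2) ⊕ Fin q)) (by simp; omega)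
    exact aux_minor H G' σ hσ hadj a c ha hc hs hcc (by omega) (by omega) g hg hgH
  have hcount' : (G'.cliqueCount : ℝ) ≤ 3 ^ p * 2 ^ q := by exact_mod_cast hcount
  have main : (G'.cliqueCount : ℝ) < 2 ^ t ∨
      (G'.cliqueCount : ℝ) < 3 ^ (((2 * t - x : ℝ)) / 3) := by
    rcases le_or_gt p x with h | h
    · left
      rw [min_eq_left h] at hN
      calc (G'.cliqueCount : ℝ) ≤ 3 ^ p * 2 ^ q := hcount'
        _ ≤ 4 ^ p * 2 ^ q := by gcongr; norm_num
        _ = 2 ^ (2 * p + q) := by rw [pow_add, pow_mul 2 2 p]; norm_num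
        _ < 2 ^ t := by apply pow_lt_pow_right₀ (by norm_num); omega
    · right
      rw [min_eq_right h.le] at hN
      exact hcount'.trans_lt (aux_num h (by omega))
  refine ⟨fun h => ?_, fun h => ?_⟩
  · have := (aux_log t x).1 h
    rcases main with h1 | h1
    · exact h1.trans this
    · exact h1
  · have := not_lt.1 (fun h' => not_lt.2 h ((aux_log t x).2 h'))
    rcases main with h1 | h1
    · exact h1
    · exact h1.trans_le this
end

section
/- For every ε > 0 there exists t₀ such that the following holds for every integer t ≥ t₀: if H is a connected graph on t vertices with x the number of edges of a maximum matching in the complement of H, then for every integer n ≥ max(4t/3 − 2x/3, t) there exists a graph on n vertices with no H-minor having at least max(3^{(2t−x)/3}, 2^t) · 2^{−εt} · n cliques. -/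
theorem aux_reach {V : Type*} {G : SimpleGraph V} {B : V → ℕ}
    (hB : ∀ u v, G.Adj u v → B u = B v) {u v : V} (h : G.Reachable u v) : B u = B v := by
  obtain ⟨p⟩ := h
  induction p with
  | nil => rfl
  | cons h _ ih => exact (hB _ _ h).trans ih

theorem aux_block {W V : Type*} {H : SimpleGraph W} {G : SimpleGraph V} {B : V → ℕ}
    (hB : ∀ u v, G.Adj u v → B u = B v) (hH : H.Connected) (f : W → Set V)
    (h1 : ∀ w, (f w).Nonempty) (h2 : ∀ w, (G.induce (f w)).Connected)
    (h4 : ∀ ⦃w₁ w₂⦄, H.Adj w₁ w₂ → ∃ v₁ ∈ f w₁, ∃ v₂ ∈ f w₂, G.Adj v₁ v₂) :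
    ∃ b, ∀ w, ∀ v ∈ f w, B v = b := by
  have key : ∀ w, ∀ u ∈ f w, ∀ v ∈ f w, B u = B v := by
    intro w u hu v hv
    have := (h2 w).preconnected ⟨u, hu⟩ ⟨v, hv⟩
    exact aux_reach (G := G.induce (f w)) (B := fun z => B z.1) (fun a b h => hB _ _ h) this
  choose e he using h1
  obtain ⟨w0⟩ := hH.nonempty
  refine ⟨B (e w0), fun w v hv => ?_⟩
  rw [key w v hv (e w) (he w)]
  refine aux_reach (G := H) (B := fun w => B (e w)) ?_ (hH.preconnected w w0)
  intro w1 w2 h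
  obtain ⟨v1, hv1, v2, hv2, h⟩ := h4 h
  show B (e w1) = B (e w2)
  rw [key w1 _ (he w1) _ hv1, hB _ _ h, key w2 _ hv2 _ (he w2)]

/-- blocks of `p` parts of size `a` -/
def auxG (a p n : ℕ) : SimpleGraph (Fin n) where
  Adj u v := u.1 / a / p = v.1 / a / p ∧ u.1 / a ≠ v.1 / a
  symm := ⟨fun _ _ h => ⟨h.1.symm, h.2.symm⟩⟩
  loopless := ⟨fun _ h => h.2 rfl⟩

theorem aux_block_card (a p n b : ℕ) (ha : 0 < a) (hp : 0 < p) :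
    (Finset.univ.filter fun v : Fin n => v.1 / a / p = b).card ≤ a * p := by
  have : ((Finset.univ.filter fun v : Fin n => v.1 / a / p = b).map Fin.valEmbedding) ⊆
      Finset.Ico (b * (a * p)) (b * (a * p) + a * p) := by
    intro x hx
    simp only [Finset.mem_map, Finset.mem_filter, Finset.mem_univ, true_and] at hx
    obtain ⟨v, hv, rfl⟩ := hx
    rw [Nat.div_div_eq_div_mul, Nat.div_eq_iff (Nat.mul_pos ha hp)] at hv
    have := Nat.mul_pos ha hp
    simp only [Finset.mem_Ico, Fin.valEmbedding_apply]
    omega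
  have h := Finset.card_le_card this
  simpa using h

/-- the cliques -/
def auxS (a p n i : ℕ) (φ : ℕ → ℕ) : Finset (Fin n) :=
  Finset.univ.filter fun v => v.1 / a / p = i ∧ v.1 % a = φ (v.1 / a % p)

theorem aux_count_s15 (a p n : ℕ) (ha : 0 < a) :
    n / (a * (p + 1)) * (a + 1) ^ p ≤ (auxG a (p + 1) n).cliqueCount := by
  classical
  let ex : (Fin p → Fin (a + 1)) → ℕ → ℕ := fun φ j =>
    match j with
    | 0 => 0
    | j + 1 => if h : j < p then (φ ⟨j, h⟩).1 else a
  let F : Fin (n / (a * (p + 1))) × (Fin p → Fin (a + 1)) →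
      {s : Finset (Fin n) // (auxG a (p + 1) n).IsClique (s : Set (Fin n))} := fun z =>
    ⟨auxS a (p + 1) n z.1.1 (ex z.2), by
      intro u hu v hv huv
      simp only [auxS, Finset.coe_filter, Finset.mem_univ, true_and, Set.mem_ofPred_eq] at hu hv
      refine ⟨hu.1.trans hv.1.symm, fun h => huv ?_⟩
      have h2 : u.1 % a = v.1 % a := by rw [hu.2, hv.2, h]
      apply Fin.ext
      rw [← Nat.div_add_mod u.1 a, ← Nat.div_add_mod v.1 a, h, h2]⟩
  have mem : ∀ (i i' : ℕ) (φ : ℕ → ℕ) (j c : ℕ), i < n / (a * (p + 1)) → j < p + 1 → c < a →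
      ∃ v : Fin n, (v ∈ auxS a (p + 1) n i' φ ↔ i = i' ∧ c = φ j) ∧
        v.1 = (i * (p + 1) + j) * a + c := by
    intro i i' φ j c hi hj hc
    have hlt : (i * (p + 1) + j) * a + c < n := by
      have h1 : (i + 1) * (a * (p + 1)) ≤ n :=
        (Nat.mul_le_mul_right _ hi).trans (Nat.div_mul_le_self n _)
      have h2 : (i * (p + 1) + j + 1) * a ≤ (i + 1) * (p + 1) * a :=
        Nat.mul_le_mul_right _ (by rw [Nat.succ_mul i]; omega)
      nlinarith
    refine ⟨⟨_, hlt⟩, ?_, rfl⟩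
    have e1 : ((i * (p + 1) + j) * a + c) / a = i * (p + 1) + j := by
      rw [mul_comm, Nat.mul_add_div ha, Nat.div_eq_of_lt hc, add_zero]
    have e2 : ((i * (p + 1) + j) * a + c) % a = c := by
      rw [mul_comm, Nat.mul_add_mod, Nat.mod_eq_of_lt hc]
    have e3 : (i * (p + 1) + j) / (p + 1) = i := by
      rw [mul_comm, Nat.mul_add_div (by omega), Nat.div_eq_of_lt hj, add_zero]
    have e4 : (i * (p + 1) + j) % (p + 1) = j := by
      rw [mul_comm, Nat.mul_add_mod, Nat.mod_eq_of_lt hj]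
    simp only [auxS, Finset.mem_filter, Finset.mem_univ, true_and, e1, e2, e3, e4]
  have hF : Function.Injective F := by
    rintro ⟨i, φ⟩ ⟨i', φ'⟩ h
    have h : auxS a (p + 1) n i.1 (ex φ) = auxS a (p + 1) n i'.1 (ex φ') :=
      congrArg Subtype.val h
    have hi : i.1 = i'.1 := by
      obtain ⟨v, hv, hv'⟩ := mem i.1 i.1 (ex φ) 0 0 i.2 (by omega) ha
      obtain ⟨w, hw, hw'⟩ := mem i.1 i'.1 (ex φ') 0 0 i.2 (by omega) ha
      have : v = w := Fin.ext (hv'.trans hw'.symm)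
      subst this
      rw [h] at hv
      exact (hw.1 (hv.2 ⟨rfl, rfl⟩)).1
    have hi' : i = i' := Fin.ext hi
    subst hi'
    have hj : ∀ j : Fin p, ∀ c < a, (c = (φ j).1 ↔ c = (φ' j).1) := by
      intro j c hc
      obtain ⟨v, hv, hv'⟩ := mem i.1 i.1 (ex φ) (j.1 + 1) c i.2 (by omega) hc
      obtain ⟨w, hw, hw'⟩ := mem i.1 i.1 (ex φ') (j.1 + 1) c i.2 (by omega) hc
      have : v = w := Fin.ext (hv'.trans hw'.symm)
      subst this
      rw [h, hw] at hv
      simpa [ex] using hv.symm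
    have : φ = φ' := by
      funext j
      apply Fin.ext
      have l1 := (φ j).2
      have l2 := (φ' j).2
      by_cases c1 : (φ j).1 < a
      · exact (hj j _ c1).1 rfl
      · by_cases c2 : (φ' j).1 < a
        · exact ((hj j _ c2).2 rfl).symm
        · omega
    rw [this]
  have := Nat.card_le_card_of_injective F hF
  simpa [SimpleGraph.cliqueCount] using this

theorem aux_sum_le {W : Type*} [Fintype W] {n : ℕ} (f : W → Set (Fin n))
    (h3 : Pairwise fun w₁ w₂ => Disjoint (f w₁) (f w₂)) (S : Finset (Fin n))
    (h : ∀ w, ∀ v ∈ f w, v ∈ S) : ∑ w, (f w).ncard ≤ S.card := by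
  classical
  have : ∑ w, (f w).ncard = (Finset.univ.biUnion fun w => (f w).toFinset).card := by
    rw [Finset.card_biUnion]
    · simp [Set.ncard_eq_toFinset_card']
    · intro x _ y _ hxy
      exact Set.disjoint_toFinset.2 (h3 hxy)
  rw [this]
  apply Finset.card_le_card
  intro v hv
  simp only [Finset.mem_biUnion, Finset.mem_univ, true_and, Set.mem_toFinset] at hv
  obtain ⟨w, hw⟩ := hv
  exact h w v hw

theorem aux_nominor1 {W : Type*} [Fintype W] {H : SimpleGraph W} (hH : H.Connected)
    (p n : ℕ) (hp : 0 < p) (hW : p < Fintype.card W) : ¬ H.IsMinor (auxG 1 p n) := by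
  rintro ⟨f, h1, h2, h3, h4⟩
  obtain ⟨b, hb⟩ := aux_block (G := auxG 1 p n) (B := fun v : Fin n => v.1 / 1 / p) (fun u v h => h.1) hH f h1 h2 h4
  have := aux_sum_le f h3 (Finset.univ.filter fun v : Fin n => v.1 / 1 / p = b)
    (fun w v hv => by simpa using hb w v hv)
  have h5 := aux_block_card 1 p n b one_pos hp
  have h6 : ∑ w : W, 1 ≤ ∑ w, (f w).ncard :=
    Finset.sum_le_sum fun w _ => (Set.ncard_pos (Set.toFinite _)).2 (h1 w)
  simp only [Finset.sum_const, Finset.card_univ, smul_eq_mul, mul_one] at h6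
  omega

theorem aux_matching_s15 {W : Type*} [Fintype W] (G : SimpleGraph W) (S : Finset W) (e : W → ℕ)
    (b p : ℕ) (he : Set.InjOn e S) (hb : ∀ w ∈ S, e w / 2 / p = b) (hp : 0 < p)
    (hG : ∀ w ∈ S, ∀ w' ∈ S, w ≠ w' → e w / 2 = e w' / 2 → G.Adj w w') :
    S.card ≤ p + G.matchingNumber := by
  classical
  rcases isEmpty_or_nonempty W with hemp | hne
  · simp [Finset.eq_empty_of_isEmpty S]
  let M : G.Subgraph :=
    { verts := {w | w ∈ S ∧ ∃ w' ∈ S, w ≠ w' ∧ e w / 2 = e w' / 2}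
      Adj := fun w w' => w ∈ S ∧ w' ∈ S ∧ w ≠ w' ∧ e w / 2 = e w' / 2
      adj_sub := fun {w w'} h => hG w h.1 w' h.2.1 h.2.2.1 h.2.2.2
      edge_vert := fun {w w'} h => ⟨h.1, w', h.2.1, h.2.2⟩
      symm := ⟨fun w w' h => ⟨h.2.1, h.1, h.2.2.1.symm, h.2.2.2.symm⟩⟩ }
  have hM : M.IsMatching := by
    rintro w ⟨hw, w', hw', hne, hq⟩
    refine ⟨w', ⟨hw, hw', hne, hq⟩, ?_⟩
    rintro w'' ⟨_, hw'', hne', hq'⟩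
    apply he hw'' hw'
    have a1 : e w ≠ e w' := fun h => hne (he hw hw' h)
    have a2 : e w ≠ e w'' := fun h => hne' (he hw hw'' h)
    omega
  have hle : M.edgeSet.ncard ≤ G.matchingNumber := by
    apply le_csSup
    · refine ⟨Nat.card (Sym2 W), ?_⟩
      rintro k ⟨M, _, rfl⟩
      rw [← Set.ncard_univ]
      exact Set.ncard_le_ncard (Set.subset_univ _) (Set.toFinite _)
    · exact ⟨M, hM, rfl⟩
  let A0 := S.filter fun w => e w % 2 = 0
  let A1 := S.filter fun w => ¬ e w % 2 = 0
  have hA : A0.card + A1.card = S.card := Finset.card_filter_add_card_filter_not _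
  let P0 := A0.image fun w => e w / 2
  let P1 := A1.image fun w => e w / 2
  have hP0 : P0.card = A0.card := Finset.card_image_of_injOn (by
    intro x hx y hy h
    simp only [A0, Finset.coe_filter, Set.mem_ofPred_eq] at hx hy
    apply he hx.1 hy.1
    simp only at h
    omega)
  have hP1 : P1.card = A1.card := Finset.card_image_of_injOn (by
    intro x hx y hy h
    simp only [A1, Finset.coe_filter, Set.mem_ofPred_eq] at hx hy
    apply he hx.1 hy.1
    simp only at h
    omega)
  have hU : (P0 ∪ P1).card ≤ p := by
    have : P0 ∪ P1 ⊆ Finset.Ico (b * p) (b * p + p) := by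
      intro x hx
      have : ∃ w ∈ S, e w / 2 = x := by
        simp only [P0, P1, A0, A1, Finset.mem_union, Finset.mem_image, Finset.mem_filter] at hx
        rcases hx with ⟨w, hw, h⟩ | ⟨w, hw, h⟩
        · exact ⟨w, hw.1, h⟩
        · exact ⟨w, hw.1, h⟩
      obtain ⟨w, hw, rfl⟩ := this
      have := hb w hw
      rw [Nat.div_eq_iff hp] at this
      simp only [Finset.mem_Ico]
      omega
    simpa using Finset.card_le_card this
  have hI : (P0 ∩ P1).card ≤ M.edgeSet.ncard := by
    have hx : ∀ x : ℕ, ∃ s : Sym2 W, x ∈ P0 ∩ P1 → s ∈ M.edgeSet ∧ ∃ w w', s = s(w, w') ∧ e w / 2 = x ∧ e w' / 2 = x := by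
      intro x
      by_cases hx : x ∈ P0 ∩ P1
      · have hx' := hx
        simp only [P0, P1, A0, A1, Finset.mem_inter, Finset.mem_image, Finset.mem_filter] at hx'
        obtain ⟨⟨w, hw, h⟩, w', hw', h'⟩ := hx'
        refine ⟨s(w, w'), fun _ => ⟨?_, w, w', rfl, h, h'⟩⟩
        rw [SimpleGraph.Subgraph.mem_edgeSet]
        refine ⟨hw.1, hw'.1, ?_, h.trans h'.symm⟩
        rintro rfl
        exact hw'.2 hw.2
      · obtain ⟨w⟩ := hne
        exact ⟨s(w, w), fun h => absurd h hx⟩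
    choose s hs using hx
    rw [← Set.ncard_coe_finset]
    refine Set.ncard_le_ncard_of_injOn s (fun x hx => (hs x hx).1) ?_ (Set.toFinite _)
    intro x hx y hy h
    obtain ⟨_, w, w', h1, h2, h3⟩ := hs x hx
    obtain ⟨_, u, u', h4, h5, h6⟩ := hs y hy
    rw [h1, h4, Sym2.eq_iff] at h
    rcases h with ⟨rfl, rfl⟩ | ⟨rfl, rfl⟩
    · exact h2.symm.trans h5
    · exact h2.symm.trans h6
  have := Finset.card_union_add_card_inter P0 P1
  omega

theorem aux_nominor2 {W : Type*} [Fintype W] {H : SimpleGraph W} (hH : H.Connected)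
    (p n : ℕ) (hp : 0 < p) (hW : 3 * p + Hᶜ.matchingNumber < 2 * Fintype.card W) :
    ¬ H.IsMinor (auxG 2 p n) := by
  classical
  rintro ⟨f, h1, h2, h3, h4⟩
  obtain ⟨b, hb⟩ := aux_block (G := auxG 2 p n) (B := fun v : Fin n => v.1 / 2 / p) (fun u v h => h.1) hH f h1 h2 h4
  have h7 := aux_sum_le f h3 (Finset.univ.filter fun v : Fin n => v.1 / 2 / p = b)
    (fun w v hv => by simpa using hb w v hv)
  have h5 := aux_block_card 2 p n b two_pos hp
  let S : Finset W := Finset.univ.filter fun w => (f w).ncard = 1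
  have h6 : ∑ w : W, 2 ≤ ∑ w, ((f w).ncard + if (f w).ncard = 1 then 1 else 0) :=
    Finset.sum_le_sum fun w _ => by
      have := (Set.ncard_pos (Set.toFinite _)).2 (h1 w)
      split_ifs <;> omega
  rw [Finset.sum_add_distrib, ← Finset.card_filter] at h6
  simp only [Finset.sum_const, Finset.card_univ, smul_eq_mul] at h6
  have h1' := h1
  choose e he using h1'
  have hS : ∀ w ∈ S, f w = {e w} := by
    intro w hw
    obtain ⟨c, hc⟩ := Set.ncard_eq_one.1 (Finset.mem_filter.1 hw).2
    have := he w
    rw [hc] at this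
    rw [hc, Set.mem_singleton_iff.1 this]
  have h8 := aux_matching_s15 Hᶜ S (fun w => (e w).1) b p (by
      intro x hx y hy h
      by_contra hne
      have hxy : e x = e y := Fin.ext h
      exact Set.disjoint_left.1 (h3 hne) (he x) (hxy ▸ he y))
    (fun w _ => hb w _ (he w)) hp (by
      intro w hw w' hw' hne hq
      rw [SimpleGraph.compl_adj]
      refine ⟨hne, fun hadj => ?_⟩
      obtain ⟨v, hv, v', hv', h⟩ := h4 hadj
      rw [hS w hw, Set.mem_singleton_iff] at hv
      rw [hS w' hw', Set.mem_singleton_iff] at hv'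
      subst hv hv'
      exact h.2 hq)
  have : S.card = (Finset.univ.filter fun w => (f w).ncard = 1).card := rfl
  omega

theorem aux_asym (ε : ℝ) (hε : 0 < ε) :
    ∃ t₀ : ℕ, ∀ t : ℕ, t₀ ≤ t → (36 * t : ℝ) * 2 ^ (-(ε * t)) ≤ 1 := by
  have h : Filter.Tendsto (fun x : ℝ => x ^ (1:ℝ) * Real.exp (-(ε * Real.log 2) * x)) Filter.atTop (nhds 0) :=
    tendsto_rpow_mul_exp_neg_mul_atTop_nhds_zero 1 _ (mul_pos hε (Real.log_pos one_lt_two))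
  have h2 := (h.comp tendsto_natCast_atTop_atTop).eventually
    (ge_mem_nhds (show (0:ℝ) < 1 / 36 by norm_num))
  obtain ⟨t₀, ht⟩ := Filter.eventually_atTop.1 h2
  refine ⟨t₀, fun t h => ?_⟩
  have := ht t h
  simp only [Function.comp, Real.rpow_one] at this
  rw [Real.rpow_def_of_pos two_pos, show Real.log 2 * -(ε * t) = -(ε * Real.log 2) * t by ring]
  linarith

theorem aux_q (n k t : ℕ) (hk : 0 < k) (hkn : k ≤ n) (hkt : k ≤ 2 * t) : n ≤ 4 * t * (n / k) := by
  have h1 : 1 ≤ n / k := (Nat.one_le_div_iff hk).2 hkn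
  have h2 := Nat.div_add_mod n k
  have h3 := Nat.mod_lt n hk
  nlinarith

theorem aux_final (t n q : ℕ) (A E C : ℝ) (hA : 0 ≤ A) (hE : (36 * t : ℝ) * E ≤ 1) (hE0 : 0 ≤ E)
    (hq : n ≤ 4 * t * q) (hC : q * A ≤ 9 * C) : A * E * n ≤ C := by
  have hq' : (n : ℝ) ≤ 4 * t * q := by exact_mod_cast hq
  have h1 : A * E * n ≤ A * E * (4 * t * q) := by gcongr
  have h2 : (q * A) * ((36 * t : ℝ) * E) ≤ (q * A) * 1 := by gcongr
  linarith

theorem exists_graph_no_minor_many_cliques (ε : ℝ) (hε : 0 < ε) :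
    ∃ t₀ : ℕ, ∀ t : ℕ, t₀ ≤ t →
      ∀ (W : Type) [Fintype W], ∀ H : SimpleGraph W, H.Connected → Fintype.card W = t →
        ∀ x : ℕ, Hᶜ.matchingNumber = x →
          ∀ n : ℕ, max ((4 * t - 2 * x : ℝ) / 3) (t : ℝ) ≤ (n : ℝ) →
            ∃ G : SimpleGraph (Fin n), ¬ H.IsMinor G ∧
              max ((3 : ℝ) ^ (((2 * t - x : ℝ)) / 3)) (2 ^ t) * 2 ^ (-(ε * t)) *
                  (n : ℝ) ≤ (G.cliqueCount : ℝ) := by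
  obtain ⟨t₀, ht₀⟩ := aux_asym ε hε
  refine ⟨max t₀ 2, fun t ht W _ H hH hW x hx n hn => ?_⟩
  have ht2 : 2 ≤ t := le_trans (le_max_right _ _) ht
  have hE := ht₀ t (le_trans (le_max_left _ _) ht)
  have hE0 : (0:ℝ) ≤ 2 ^ (-(ε * t)) := by positivity
  have hn1 : ((4 * t - 2 * x : ℝ) / 3) ≤ n := le_trans (le_max_left _ _) hn
  have hn2 : t ≤ n := by exact_mod_cast le_trans (le_max_right _ _) hn
  by_cases hc : (3 : ℝ) ^ (((2 * t - x : ℝ)) / 3) ≤ 2 ^ t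
  · rw [max_eq_right hc]
    obtain ⟨p, rfl⟩ : ∃ p, t = p + 2 := ⟨t - 2, by omega⟩
    refine ⟨auxG 1 (p + 1) n, aux_nominor1 hH _ _ (by omega) (by omega), ?_⟩
    refine aux_final (p + 2) n (n / (1 * (p + 1))) _ _ _ (by positivity) hE hE0
      (aux_q _ _ _ (by omega) (by omega) (by omega)) ?_
    have h := aux_count_s15 1 p n one_pos
    have h' : ((n / (1 * (p + 1)) : ℕ) : ℝ) * 2 ^ p ≤ (auxG 1 (p + 1) n).cliqueCount := by
      exact_mod_cast h
    have h0 : (0:ℝ) ≤ ((n / (1 * (p + 1)) : ℕ) : ℝ) * 2 ^ p := by positivity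
    rw [pow_add]
    linarith
  · push Not at hc
    rw [max_eq_left hc.le]
    have hx3 : 3 + x < 2 * t := by
      by_contra hcon
      push Not at hcon
      have hcon' : (2 * t : ℝ) ≤ 3 + x := by exact_mod_cast hcon
      have h1 : (3 : ℝ) ^ (((2 * t - x : ℝ)) / 3) ≤ 3 ^ (1:ℝ) :=
        Real.rpow_le_rpow_of_exponent_le (by norm_num) (by linarith)
      have h2 : (2:ℝ) ^ 2 ≤ 2 ^ t := pow_le_pow_right₀ (by norm_num) ht2
      rw [Real.rpow_one] at h1
      linarith
    obtain ⟨p, hp1, hp2⟩ : ∃ p, 3 * (p + 1) + x < 2 * t ∧ 2 * t ≤ 3 * (p + 1) + 3 + x :=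
      ⟨(2 * t - x - 1) / 3 - 1, by omega, by omega⟩
    have hpn : 2 * (p + 1) ≤ n := by
      have h1 : (3 * (p + 1) + x : ℝ) < 2 * t := by exact_mod_cast hp1
      have : (2 * (p + 1) : ℝ) ≤ n := by linarith
      exact_mod_cast this
    refine ⟨auxG 2 (p + 1) n, aux_nominor2 hH _ _ (by omega) (by omega), ?_⟩
    refine aux_final t n (n / (2 * (p + 1))) _ _ _ (by positivity) hE hE0
      (aux_q _ _ _ (by omega) hpn (by omega)) ?_
    have h := aux_count_s15 2 p n two_pos
    have h' : ((n / (2 * (p + 1)) : ℕ) : ℝ) * 3 ^ p ≤ (auxG 2 (p + 1) n).cliqueCount := by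
      exact_mod_cast h
    have h1 : (3 : ℝ) ^ (((2 * t - x : ℝ)) / 3) ≤ 3 ^ ((p + 2 : ℕ) : ℝ) := by
      apply Real.rpow_le_rpow_of_exponent_le (by norm_num)
      have : (2 * t : ℝ) ≤ 3 * (p + 1) + 3 + x := by exact_mod_cast hp2
      push_cast
      linarith
    rw [Real.rpow_natCast, pow_add] at h1
    have h2 : ((n / (2 * (p + 1)) : ℕ) : ℝ) * (3 : ℝ) ^ (((2 * t - x : ℝ)) / 3) ≤
      ((n / (2 * (p + 1)) : ℕ) : ℝ) * (3 ^ p * 3 ^ 2) := by gcongr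
    linarith
end

section
/- Let α* = (2−√2)/2 − 0.001. For every integer d ≥ 2, there do not exist nonnegative real numbers β₀, β₁, …, β_d with β₀ + β₁ + ⋯ + β_d = 1, Σ_{i=0}^{d} β_i/2^i ≥ 2α*, and (1/d)·Σ_{i=1}^{d} i·β_i ≥ 2α*. -/
theorem key_bound (d i : ℕ) (hd : 2 ≤ d) (hi : i ≤ d) :
    (1 : ℝ) / 2 ^ i ≤ 1 - 3 / 4 * ((1 / d) * i) := by
  have hd' : (2 : ℝ) ≤ d := by exact_mod_cast hd
  have hi' : (i : ℝ) ≤ d := by exact_mod_cast hi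
  have hinv : (1 : ℝ) / d ≤ 1 / 2 := one_div_le_one_div_of_le (by norm_num) hd'
  rcases i with _ | _ | k
  · simp
  · norm_num at hinv ⊢
    linarith
  · have h1 : (1 : ℝ) / d * ((k + 1 + 1 : ℕ) : ℝ) ≤ 1 := by
      rw [one_div_mul_eq_div]
      exact (div_le_one (by linarith)).2 hi'
    have h2 : (1 : ℝ) / 2 ^ (k + 1 + 1) ≤ 1 / 4 := by
      apply one_div_le_one_div_of_le (by norm_num)
      have : (1 : ℝ) ≤ 2 ^ k := one_le_pow₀ (by norm_num)
      rw [pow_succ, pow_succ]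
      linarith
    linarith

/-- For `d ≥ 2` there are no nonnegative reals `β₀, …, β_d` summing to `1` with
`Σ β_i / 2^i ≥ 2α*` and `(1/d) Σ i β_i ≥ 2α*`. -/
theorem lp_infeasible (d : ℕ) (hd : 2 ≤ d) :
    ¬ ∃ β : ℕ → ℝ,
        (∀ i ∈ Finset.range (d + 1), 0 ≤ β i) ∧
        (∑ i ∈ Finset.range (d + 1), β i) = 1 ∧
        2 * alphaStar ≤ ∑ i ∈ Finset.range (d + 1), β i / 2 ^ i ∧
        2 * alphaStar ≤ (1 / d) * ∑ i ∈ Finset.range (d + 1), (i : ℝ) * β i := by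
  rintro ⟨β, h0, h1, h2, h3⟩
  have h : ∑ i ∈ Finset.range (d + 1), β i / 2 ^ i ≤
      ∑ i ∈ Finset.range (d + 1), (β i - 3 / 4 * ((1 / d) * ((i : ℝ) * β i))) := by
    apply Finset.sum_le_sum
    intro i hi
    have hk := mul_le_mul_of_nonneg_left
      (key_bound d i hd (Nat.lt_succ_iff.1 (Finset.mem_range.1 hi))) (h0 i hi)
    calc β i / 2 ^ i = β i * (1 / 2 ^ i) := by ring
      _ ≤ _ := hk
      _ = _ := by ring
  rw [Finset.sum_sub_distrib, ← Finset.mul_sum, ← Finset.mul_sum, h1] at h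
  have hs : Real.sqrt 2 < 1.415 := by
    rw [Real.sqrt_lt' (by norm_num)]
    norm_num
  unfold alphaStar at h2 h3
  norm_num at hs h2 h3 h
  linarith
end
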